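/- arXiv:1806.04018 — 6 statements merged into one kernel-verified Lean document; each statement's English description precedes it below -/
import Mathlib

section
/- Let W be a reduced and cyclically reduced word of length n representing an element of F₂, and suppose W = U ++ V where U and V are nonempty words. Assume there exists a natural number r with 0 < r < n such that U occurs at offset r in the bi-infinite periodic extension W̃ of W, and there exists a natural number s with s < n and s ≠ |U| such that V occurs at offset s in W̃. Then there exist words B, C, I and a natural number k > 0 such that 0 < |C| < n, B is a terminal subword of C, I is an initial subword of C, and W = B ++ C^k ++ I. -/
/-- `wordPow C k` is the concatenation of `k` copies of the word `C`. -/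
def wordPow {α : Type*} (C : List α) (k : ℕ) : List α := (List.replicate k C).flatten

/-- `OccursAt W U r` says that the word `U` occurs at offset `r` in the bi-infinite
periodic extension `W̃` of `W`, where `W̃ i = W[i mod |W|]`. -/
def OccursAt {α : Type*} (W U : List α) (r : ℤ) : Prop :=
  ∀ i : ℕ, i < U.length → W[((r + i) % (W.length : ℤ)).toNat]? = U[i]?

/-- A word over `(Fin 2) × Bool` is reduced if it has no two adjacent letters of the
form `(i, b)`, `(i, !b)`. -/
def Reduced (w : List ((Fin 2) × Bool)) : Prop :=
  List.Chain' (fun a b => ¬(a.1 = b.1 ∧ b.2 = !a.2)) w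

/-- A word is cyclically reduced if it is reduced and its last letter and first letter
are not of the form `(i, b)`, `(i, !b)`. -/
def CyclicallyReduced (w : List ((Fin 2) × Bool)) : Prop :=
  Reduced w ∧ ∀ a b, w.getLast? = some a → w.head? = some b → ¬(a.1 = b.1 ∧ b.2 = !a.2)

/-- The **Fine–Wilf theorem** for sequences: a sequence which has both periods `p` and `q` on its
first `p + q` terms has period `gcd p q` there. -/
theorem periodic_gcd_of_periodic {α : Type*} (f : ℕ → α) (p q : ℕ)
    (hfp : ∀ i, i < q → f i = f (i + p)) (hfq : ∀ i, i < p → f i = f (i + q)) :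
    ∀ i, i + Nat.gcd p q < p + q → f i = f (i + Nat.gcd p q) := by
  have per : ((List.range (p + q)).map f).HasPeriod (Nat.gcd p q) := by
    apply List.HasPeriod.gcd
    · rw [List.hasPeriod_iff_getElem?]
      intro i hi
      simp only [List.length_map, List.length_range] at hi
      simp [show i < p + q by omega, show i + p < p + q by omega,
        hfp i (by omega)]
    · rw [List.hasPeriod_iff_getElem?]
      intro i hi
      simp only [List.length_map, List.length_range] at hi
      simp [show i < p + q by omega, show i + q < p + q by omega,
        hfq i (by omega)]
    · simp
  intro i hi
  have h := List.hasPeriod_iff_getElem?.1 per i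
    (by simp only [List.length_map, List.length_range]; omega)
  simpa [show i < p + q by omega, hi] using h

/-- If a sequence has period `p` on `[0, m + p)` and period `q` on `[m - q, n)`, then it has
period `gcd p q` on `[0, n)`. -/
theorem periodic_gcd_of_overlap {α : Type*} (f : ℕ → α) (m n p q : ℕ) (hp : 0 < p) (hq : 0 < q)
    (hqm : q ≤ m) (hpn : m + p ≤ n) (hfp : ∀ i, i < m → f i = f (i + p))
    (hfq : ∀ i, m ≤ i + q → i + q < n → f i = f (i + q)) :
    ∀ i, i + Nat.gcd p q < n → f i = f (i + Nat.gcd p q) := by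
  have hgp : Nat.gcd p q ≤ p := Nat.gcd_le_left q hp
  have hgq : Nat.gcd p q ≤ q := Nat.gcd_le_right p hq
  have mid : ∀ i, m - q ≤ i → i + Nat.gcd p q < m + p → f i = f (i + Nat.gcd p q) := by
    intro i h₁ h₂
    have := periodic_gcd_of_periodic (fun j => f (m - q + j)) p q
      (fun j hj => by simpa only [Nat.add_assoc] using hfp (m - q + j) (by omega))
      (fun j hj => by simpa only [Nat.add_assoc] using hfq (m - q + j) (by omega) (by omega))
      (i - (m - q)) (by omega)
    simp only [← Nat.add_assoc, Nat.add_sub_cancel' h₁] at this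
    exact this
  have left : ∀ d i, m - q ≤ i + d → i + Nat.gcd p q < m + p → f i = f (i + Nat.gcd p q) := by
    intro d
    induction d using Nat.strong_induction_on with
    | _ d ih =>
      intro i h₁ h₂
      by_cases hi : m - q ≤ i
      · exact mid i hi h₂
      · have h₃ := ih (d - p) (by omega) (i + p) (by omega) (by omega)
        rw [hfp i (by omega), h₃, hfp (i + Nat.gcd p q) (by omega)]
        congr 1; omega
  intro i
  induction i using Nat.strong_induction_on with
  | _ i ih =>
    intro hi
    by_cases him : i + Nat.gcd p q < m + p
    · exact left m i (by omega) him
    · have h₁ := hfq (i - q) (by omega) (by omega)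
      have h₂ := hfq (i + Nat.gcd p q - q) (by omega) (by omega)
      rw [Nat.sub_add_cancel (by omega)] at h₁ h₂
      rw [← h₁, ← h₂, ih (i - q) (by omega) (by omega)]
      congr 1; omega

/-- A word with period `p > 0` is a power of its prefix of length `p` followed by a prefix of
that prefix. -/
theorem exists_eq_wordPow_append_of_periodic {α : Type*} (p : ℕ) (hp : 0 < p) (W : List α)
    (hpn : p ≤ W.length) (hW : ∀ i, i + p < W.length → W[i]? = W[i + p]?) :
    ∃ (I : List α) (k : ℕ), 0 < k ∧ I <+: W.take p ∧ W = wordPow (W.take p) k ++ I := by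
  induction hN : W.length using Nat.strong_induction_on generalizing W with
  | _ N ih =>
    subst hN
    have hprefix : W.drop p <+: W := by
      rw [List.prefix_iff_getElem?]
      intro i hi
      rw [List.length_drop] at hi
      rw [hW i (by omega), List.getElem_drop, List.getElem?_eq_getElem (by omega)]
      congr 2; omega
    by_cases hlt : (W.drop p).length < p
    · refine ⟨W.drop p, 1, one_pos, ?_, by simp [wordPow]⟩
      exact List.prefix_take_iff.2 ⟨hprefix, hlt.le⟩
    · have hlen : (W.drop p).length = W.length - p := List.length_drop
      obtain ⟨I, k, -, hI, hk⟩ := ih (W.drop p).length (by omega) (W.drop p) (by omega)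
        (fun i hi => by
          rw [List.getElem?_drop, List.getElem?_drop, hW (p + i) (by omega), Nat.add_assoc]) rfl
      have htake : (W.drop p).take p = W.take p := by
        obtain ⟨t, ht⟩ := hprefix
        conv_rhs => rw [← ht]
        rw [List.take_append_of_le_length (by omega)]
      rw [htake] at hI hk
      refine ⟨I, k + 1, k.succ_pos, hI, ?_⟩
      conv_lhs => rw [← List.take_append_drop p W, hk]
      simp [wordPow, List.replicate_succ]

/-- In the situation where both factors of `W = U ++ V` occur at a second place in the periodic
extension of `W`, the word `W` has a period smaller than its length. -/
theorem exists_period_of_occursAt {α : Type*} (U V : List α) (r s : ℕ) (hr0 : 0 < r)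
    (hrn : r < (U ++ V).length) (hr : OccursAt (U ++ V) U r)
    (hsn : s < (U ++ V).length) (hsU : s ≠ U.length) (hs : OccursAt (U ++ V) V s) :
    ∃ p, 0 < p ∧ p < (U ++ V).length ∧
      ∀ i, i + p < (U ++ V).length → (U ++ V)[i]? = (U ++ V)[i + p]? := by
  have hn : (U ++ V).length = U.length + V.length := List.length_append
  have hr' : ∀ i, i < U.length → (U ++ V)[(r + i) % (U ++ V).length]? = (U ++ V)[i]? := by
    intro i hi
    rw [List.getElem?_append_left hi, ← hr i hi]
    norm_cast
  have hs' : ∀ i, i < V.length →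
      (U ++ V)[(s + i) % (U ++ V).length]? = (U ++ V)[U.length + i]? := by
    intro i hi
    rw [List.getElem?_append_right (Nat.le_add_right U.length i), Nat.add_sub_cancel_left, ← hs i hi]
    norm_cast
  generalize U ++ V = W at *
  by_cases hwrapU : W.length < r + U.length
  · refine ⟨r, hr0, hrn, fun i hi => ?_⟩
    rw [← hr' i (by omega), Nat.mod_eq_of_lt (by omega), Nat.add_comm]
  rcases hsU.lt_or_gt with hlt | hgt
  · refine ⟨Nat.gcd r (U.length - s), Nat.gcd_pos_of_pos_left _ hr0,
      (Nat.gcd_le_left _ hr0).trans_lt hrn, ?_⟩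
    refine periodic_gcd_of_overlap (fun i => W[i]?) U.length W.length r (U.length - s) hr0
      (by omega) (by omega) (by omega) (fun i hi => ?_) (fun i h₁ h₂ => ?_)
    · rw [← hr' i hi, Nat.mod_eq_of_lt (by omega), Nat.add_comm]
    · have h := hs' (i - s) (by omega)
      rw [Nat.mod_eq_of_lt (by omega), Nat.add_sub_cancel' (by omega)] at h
      simp only [h]
      congr 1; omega
  · refine ⟨U.length + W.length - s, by omega, by omega, fun i hi => ?_⟩
    have h := hs' (i + W.length - s) (by omega)
    rw [Nat.add_sub_cancel' (by omega), Nat.add_mod_right, Nat.mod_eq_of_lt (by omega)] at h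
    rw [h]
    congr 1; omega

/-- If a reduced, cyclically reduced word `W = U ++ V` (with `U`, `V` nonempty) is such
that `U` occurs at some offset `r` with `0 < r < n` in the bi-infinite periodic extension
of `W`, and `V` occurs at some offset `s < n` with `s ≠ |U|`, then
`W = B ++ C^k ++ I` with `k > 0`, `0 < |C| < n`, `B` a suffix of `C` and `I` a prefix
of `C`. -/
theorem statement0 (W U V : List ((Fin 2) × Bool)) (n : ℕ)
    (hlen : W.length = n)
    (hred : Reduced W) (hcyc : CyclicallyReduced W)
    (hWUV : W = U ++ V) (hU : U ≠ []) (hV : V ≠ [])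
    (hr : ∃ r : ℕ, 0 < r ∧ r < n ∧ OccursAt W U (r : ℤ))
    (hs : ∃ s : ℕ, s < n ∧ s ≠ U.length ∧ OccursAt W V (s : ℤ)) :
    ∃ (B C I : List ((Fin 2) × Bool)) (k : ℕ), 0 < k ∧ 0 < C.length ∧ C.length < n ∧
      B <:+ C ∧ I <+: C ∧ W = B ++ wordPow C k ++ I := by
  subst hlen hWUV
  obtain ⟨r, hr0, hrn, hr⟩ := hr
  obtain ⟨s, hsn, hsU, hs⟩ := hs
  obtain ⟨p, hp, hpn, hper⟩ := exists_period_of_occursAt U V r s hr0 hrn hr hsn hsU hs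
  obtain ⟨I, k, hk, hI, hW⟩ := exists_eq_wordPow_append_of_periodic p hp (U ++ V) hpn.le hper
  have hlen : ((U ++ V).take p).length = p := List.length_take_of_le hpn.le
  exact ⟨[], (U ++ V).take p, I, k, hk, by omega, by omega, List.nil_suffix, hI, hW⟩
end

section
/- Let U be a word of length m over a type α and let p be a natural number with 0 < p < m such that U has period p, i.e., U[i] = U[i + p] for every i with i + p < m. Then, setting k = m / p (integer division, so k > 0), there exist words B and C with |C| = p such that B is a terminal subword of C and U = B ++ C^k. -/
theorem wordPow_succ {α : Type*} (C : List α) (k : ℕ) :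
    wordPow C (k + 1) = wordPow C k ++ C := by
  simp [wordPow, List.replicate_succ']

/-- A word whose shift by `p` agrees with its prefix of complementary length is a power of a
word of length `p` preceded by a suffix of that word. -/
theorem exists_eq_append_wordPow_of_drop_eq_take {α : Type*} (p r : ℕ) (hr : r ≤ p) (k : ℕ)
    (U : List α) (hlen : U.length = r + p * (k + 1))
    (hU : U.drop p = U.take (U.length - p)) :
    ∃ B C : List α, C.length = p ∧ B <:+ C ∧ U = B ++ wordPow C (k + 1) := by
  induction k generalizing U with
  | zero =>
    have hlen' : U.length = r + p := by simpa using hlen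
    refine ⟨U.drop p, U.drop r, by simp [hlen'], List.drop_suffix_drop_left U hr, ?_⟩
    rw [hU, hlen', Nat.add_sub_cancel]
    simp [wordPow]
  | succ k ih =>
    have hlen' : U.length = r + p * (k + 1) + p := by rw [hlen]; ring
    have hV : (U.drop p).length = r + p * (k + 1) := by simp [hlen']
    obtain ⟨B, C, hC, hBC, h⟩ := ih (U.drop p) hV (by
      conv_lhs => rw [hU]
      rw [List.drop_take, List.length_drop])
    refine ⟨B, C, hC, hBC, ?_⟩
    have hCU : C <:+ U := by
      refine List.IsSuffix.trans ⟨B ++ wordPow C k, ?_⟩ (List.drop_suffix p U)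
      rw [h, wordPow_succ, List.append_assoc]
    have hCd : C = U.drop (U.length - p) := by
      rw [← hC]; exact List.suffix_iff_eq_drop.mp hCU
    rw [wordPow_succ, ← List.append_assoc, ← h, hU, hCd]
    exact (List.take_append_drop _ _).symm

/-- If a word `U` of length `m` has period `p` with `0 < p < m`, then, setting
`k = m / p` (so `k > 0`), there are words `B`, `C` with `|C| = p`, `B` a terminal
subword (suffix) of `C`, and `U = B ++ C^k`. -/
theorem statement1 {α : Type*} (U : List α) (m p : ℕ) (hm : U.length = m)
    (hp0 : 0 < p) (hpm : p < m)
    (hper : ∀ i : ℕ, i + p < m → U[i]? = U[i + p]?) :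
    0 < m / p ∧ ∃ B C : List α, C.length = p ∧ B <:+ C ∧ U = B ++ wordPow C (m / p) := by
  have hk : 0 < m / p := Nat.div_pos hpm.le hp0
  refine ⟨hk, ?_⟩
  obtain ⟨k, hk'⟩ := Nat.exists_eq_succ_of_ne_zero hk.ne'
  rw [hk']
  refine exists_eq_append_wordPow_of_drop_eq_take p (m % p) (Nat.mod_lt m hp0).le k U ?_ ?_
  · rw [hm, ← Nat.succ_eq_add_one, ← hk', Nat.mod_add_div]
  · refine List.ext_getElem? fun i => ?_
    rw [List.getElem?_drop, List.getElem?_take, hm, Nat.add_comm p i]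
    split_ifs with hi
    · exact (hper i (by omega)).symm
    · exact List.getElem?_eq_none (by omega)
end

section
/- Let W and W' be cyclically reduced words, both of length n ≥ 1, which represent conjugate elements of F₂. Suppose W = W₀ ++ [x] for some word W₀ and letter x, and suppose W₀ is an infix (contiguous subword) of W'. Then W' = [x] ++ W₀ or W' = W₀ ++ [x]. -/
/-- The homomorphism `F₂ → ℤ` sending the generators to `1` and `2`; it separates the four
letters. -/
def letterWeight : FreeGroup (Fin 2) →* Multiplicative ℤ :=
  FreeGroup.lift fun i => Multiplicative.ofAdd ((i : ℤ) + 1)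

theorem letterWeight_mk_singleton_injective :
    Function.Injective fun a : Fin 2 × Bool => letterWeight (FreeGroup.mk [a]) := by
  rintro ⟨i, b⟩ ⟨j, c⟩ h
  have h' := congrArg Multiplicative.toAdd h
  fin_cases i <;> fin_cases j <;> cases b <;> cases c <;>
    simp [letterWeight, FreeGroup.lift_mk] at h' ⊢

theorem letterWeight_eq_of_isConj {g h : FreeGroup (Fin 2)} (hgh : IsConj g h) :
    letterWeight g = letterWeight h :=
  isConj_iff_eq.mp (letterWeight.map_isConj hgh)

theorem letterWeight_mk_append (u v : List (Fin 2 × Bool)) :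
    letterWeight (FreeGroup.mk (u ++ v)) =
      letterWeight (FreeGroup.mk u) * letterWeight (FreeGroup.mk v) := by
  rw [← FreeGroup.mul_mk, map_mul]

/-- A list with an infix shorter by one is obtained from it by adding a letter at an end. -/
theorem List.IsInfix.eq_cons_or_eq_concat {α : Type*} {u v : List α} (h : u <:+: v)
    (hlen : v.length = u.length + 1) : ∃ y, v = [y] ++ u ∨ v = u ++ [y] := by
  obtain ⟨p, q, rfl⟩ := h
  simp only [List.length_append] at hlen
  rcases Nat.eq_zero_or_pos p.length with hp | hp
  · obtain ⟨y, rfl⟩ := List.length_eq_one_iff.mp (show q.length = 1 by lia)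
    exact ⟨y, .inr (by simp [List.length_eq_zero_iff.mp hp])⟩
  · obtain ⟨y, rfl⟩ := List.length_eq_one_iff.mp (show p.length = 1 by lia)
    exact ⟨y, .inl (by simp [List.length_eq_zero_iff.mp (show q.length = 0 by lia)])⟩

/-- If `W` and `W'` are cyclically reduced words of the same length `n ≥ 1`
representing conjugate elements of `F₂`, `W = W₀ ++ [x]`, and `W₀` is an infix of `W'`,
then `W' = [x] ++ W₀` or `W' = W₀ ++ [x]`. -/
theorem statement3 (W W' W₀ : List ((Fin 2) × Bool)) (x : (Fin 2) × Bool) (n : ℕ)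
    (hn : 1 ≤ n) (hW : W.length = n) (hW' : W'.length = n)
    (hcW : CyclicallyReduced W) (hcW' : CyclicallyReduced W')
    (hconj : IsConj (FreeGroup.mk W) (FreeGroup.mk W'))
    (hdec : W = W₀ ++ [x]) (hinf : W₀ <:+: W') :
    W' = [x] ++ W₀ ∨ W' = W₀ ++ [x] := by
  subst hdec
  have hweight := letterWeight_eq_of_isConj hconj
  obtain ⟨y, rfl | rfl⟩ := hinf.eq_cons_or_eq_concat (by simp [hW', ← hW])
  · rw [letterWeight_mk_append, letterWeight_mk_append, mul_comm] at hweight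
    exact .inl (by rw [letterWeight_mk_singleton_injective (mul_right_cancel hweight)])
  · rw [letterWeight_mk_append, letterWeight_mk_append] at hweight
    exact .inr (by rw [letterWeight_mk_singleton_injective (mul_left_cancel hweight)])
end

section
/- Let a and b be elements of F₂, each belonging to the set {x, y, x⁻¹, y⁻¹} of generators and their inverses. If there exists u ∈ F₂ such that u * a is conjugate to b * u in F₂, then a = b. -/
/-- Let `a`, `b` be elements of `F₂ = FreeGroup (Fin 2)`, each a generator or the
inverse of a generator.  If `u * a` is conjugate to `b * u` for some `u ∈ F₂`,
then `a = b`. -/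
theorem statement4 (a b : FreeGroup (Fin 2))
    (ha : a ∈ ({FreeGroup.of 0, FreeGroup.of 1, (FreeGroup.of 0)⁻¹,
      (FreeGroup.of 1)⁻¹} : Set (FreeGroup (Fin 2))))
    (hb : b ∈ ({FreeGroup.of 0, FreeGroup.of 1, (FreeGroup.of 0)⁻¹,
      (FreeGroup.of 1)⁻¹} : Set (FreeGroup (Fin 2))))
    (h : ∃ u : FreeGroup (Fin 2), IsConj (u * a) (b * u)) :
    a = b := by
  obtain ⟨u, hu⟩ := h
  -- Conjugate elements agree in a commutative quotient; `x ↦ 1`, `y ↦ 2` separates the letters.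
  let φ : FreeGroup (Fin 2) →* Multiplicative ℤ :=
    FreeGroup.lift ![Multiplicative.ofAdd 1, Multiplicative.ofAdd 2]
  have hφ : φ a = φ b := by
    have hconj := isConj_iff_eq.mp (φ.map_isConj hu)
    rw [map_mul, map_mul, mul_comm] at hconj
    exact mul_right_cancel hconj
  have hx : φ (FreeGroup.of 0) = Multiplicative.ofAdd 1 := by simp [φ]
  have hy : φ (FreeGroup.of 1) = Multiplicative.ofAdd 2 := by simp [φ]
  simp only [Set.mem_insert_iff, Set.mem_singleton_iff] at ha hb
  rcases ha with rfl | rfl | rfl | rfl <;> rcases hb with rfl | rfl | rfl | rfl <;>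
    first
    | rfl
    | (simp only [map_inv, hx, hy] at hφ
       exact absurd hφ (by decide))
end

section
/- Let W be a word of length n ≥ 2 over a type α which is primitive, and let U be a word with |U| ≥ n − 1. If U occurs in the bi-infinite periodic extension W̃ of W at two offsets r₁ and r₂ with r₁ not congruent to r₂ modulo n, then a contradiction follows; equivalently, any word occurring at two offsets of W̃ that are not congruent modulo n has length at most n − 2. -/
theorem length_wordPow {α : Type*} (C : List α) (k : ℕ) :
    (wordPow C k).length = k * C.length := by
  simp [wordPow]

theorem getElem?_wordPow {α : Type*} (C : List α) (k i : ℕ) (hi : i < k * C.length) :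
    (wordPow C k)[i]? = C[i % C.length]? := by
  induction k generalizing i with
  | zero => simp at hi
  | succ k ih =>
    have hcons : wordPow C (k + 1) = C ++ wordPow C k := by
      simp [wordPow, List.replicate_succ]
    rw [hcons]
    rcases lt_or_ge i C.length with h | h
    · rw [List.getElem?_append_left h, Nat.mod_eq_of_lt h]
    · rw [Nat.succ_mul] at hi
      rw [List.getElem?_append_right h, ih _ (by omega), Nat.mod_eq_sub_mod h]

/-- The letter at position `i` of the bi-infinite periodic extension of `W`. -/
def periodicExt {α : Type*} (W : List α) (i : ℤ) : Option α :=
  W[(i % (W.length : ℤ)).toNat]?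

theorem periodicExt_periodic {α : Type*} (W : List α) :
    Function.Periodic (periodicExt W) (W.length : ℤ) := by
  intro i
  simp [periodicExt]

theorem periodicExt_natCast {α : Type*} (W : List α) {i : ℕ} (hi : i < W.length) :
    periodicExt W i = W[i]? := by
  have h : ((i : ℤ) % (W.length : ℤ)).toNat = i := by
    rw [Int.emod_eq_of_lt (by omega) (by omega), Int.toNat_natCast]
  rw [periodicExt, h]

theorem periodicExt_congr {α : Type*} (W : List α) {i j : ℤ}
    (h : i ≡ j [ZMOD (W.length : ℤ)]) : periodicExt W i = periodicExt W j := by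
  rw [periodicExt, periodicExt, h]

theorem Function.Periodic.int_gcd {β : Type*} {f : ℤ → β} {a b : ℤ}
    (ha : Function.Periodic f a) (hb : Function.Periodic f b) :
    Function.Periodic f (Int.gcd a b : ℤ) := by
  rw [Int.gcd_eq_gcd_ab, mul_comm a, mul_comm b]
  exact (ha.int_mul _).add_period (hb.int_mul _)

/-- A word whose periodic extension has a period dividing its length is a power. -/
theorem eq_wordPow_take_of_periodic {α : Type*} (W : List α) {g m : ℕ} (hm : 0 < m)
    (hlen : W.length = m * g) (hper : Function.Periodic (periodicExt W) (g : ℤ)) :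
    W = wordPow (W.take g) m := by
  have hgle : g ≤ W.length := hlen ▸ Nat.le_mul_of_pos_left g hm
  have htake : (W.take g).length = g := by simp [hgle]
  apply List.ext_getElem?
  intro i
  rcases lt_or_ge i W.length with hi | hi
  · have hg : 0 < g := by
      rcases Nat.eq_zero_or_pos g with rfl | h
      · simp at hlen
        simp [hlen] at hi
      · exact h
    have hig : i % g < g := Nat.mod_lt _ hg
    rw [getElem?_wordPow _ _ _ (by rw [htake, ← hlen]; exact hi), htake,
      List.getElem?_take_of_lt hig, ← periodicExt_natCast W hi,
      ← periodicExt_natCast W (hig.trans_le hgle)]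
    have h := hper.int_mul (i / g : ℕ) ((i % g : ℕ) : ℤ)
    rw [← h]
    congr 1
    rw [Int.cast_id]
    exact_mod_cast (Nat.mod_add_div' i g).symm
  · rw [List.getElem?_eq_none hi, List.getElem?_eq_none]
    rw [length_wordPow, htake, ← hlen]
    exact hi

/-- If shifting by `d` preserves an `n`-periodic function off a single residue class,
then it preserves it everywhere. -/
theorem Function.Periodic.of_eq_off_residue {β : Type*} {f : ℤ → β} {n : ℕ} (hn : 0 < n)
    (hf : ∀ i j : ℤ, i ≡ j [ZMOD (n : ℤ)] → f i = f j) {d e : ℤ}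
    (hd : ∀ j : ℤ, ¬ j ≡ e [ZMOD (n : ℤ)] → f (j + d) = f j) :
    Function.Periodic f d := by
  have horbit : ∀ j : ℕ, f (e + (j + 1) * d) = f (e + d) := by
    intro j
    induction j with
    | zero => simp
    | succ j ih =>
      have hstep : e + ((j + 1 : ℕ) + 1) * d = e + (j + 1) * d + d := by push_cast; ring
      rw [hstep]
      by_cases h : e + (j + 1) * d ≡ e [ZMOD (n : ℤ)]
      · exact hf _ _ (h.add_right d)
      · rw [hd _ h, ih]
  intro j
  by_cases h : j ≡ e [ZMOD (n : ℤ)]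
  · rw [hf _ _ (h.add_right d), hf _ _ h, ← horbit (n - 1)]
    apply hf
    have hcast : ((n - 1 : ℕ) : ℤ) + 1 = n := by omega
    rw [hcast]
    simp [Int.ModEq]
  · exact hd j h

/-- If `W` is a primitive word of length `n ≥ 2` and `U` occurs in the bi-infinite
periodic extension of `W` at two offsets that are not congruent modulo `n`, then
`|U| ≤ n - 2` (equivalently, `|U| ≥ n - 1` gives a contradiction). -/
theorem statement5 {α : Type*} (W U : List α) (n : ℕ) (hn : 2 ≤ n) (hW : W.length = n)
    (hprim : ¬ ∃ (C : List α) (m : ℕ), 2 ≤ m ∧ W = wordPow C m)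
    (r₁ r₂ : ℤ) (h1 : OccursAt W U r₁) (h2 : OccursAt W U r₂)
    (hmod : ¬ r₁ ≡ r₂ [ZMOD (n : ℤ)]) :
    U.length ≤ n - 2 := by
  subst hW
  by_contra hU
  have hagree : ∀ i : ℕ, i < U.length → periodicExt W (r₁ + i) = periodicExt W (r₂ + i) :=
    fun i hi => (h1 i hi).trans (h2 i hi).symm
  have hper : Function.Periodic (periodicExt W) (r₂ - r₁) := by
    refine Function.Periodic.of_eq_off_residue (n := W.length) (e := r₁ - 1) (by omega)
      (fun _ _ => periodicExt_congr W) fun j hj => ?_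
    have hnonneg : 0 ≤ (j - r₁) % (W.length : ℤ) := Int.emod_nonneg _ (by omega)
    have hlt : (j - r₁) % (W.length : ℤ) < W.length := Int.emod_lt_of_pos _ (by omega)
    obtain ⟨i, hi⟩ := Int.eq_ofNat_of_zero_le hnonneg
    have hji : j - r₁ ≡ i [ZMOD (W.length : ℤ)] := by
      rw [← hi]
      exact (Int.mod_modEq _ _).symm
    have hne : i ≠ W.length - 1 := by
      rintro rfl
      apply hj
      have hcast : ((W.length - 1 : ℕ) : ℤ) = -1 + W.length := by omega
      rw [hcast] at hji
      have h := (hji.trans Int.add_modEq_right).add_right r₁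
      rwa [sub_add_cancel, neg_add_eq_sub] at h
    have hj₁ : j ≡ r₁ + i [ZMOD (W.length : ℤ)] := by
      simpa using hji.add_left r₁
    have hj₂ : j + (r₂ - r₁) ≡ r₂ + i [ZMOD (W.length : ℤ)] := by
      convert hji.add_left r₂ using 1
      ring
    rw [periodicExt_congr W hj₁, periodicExt_congr W hj₂]
    exact (hagree i (by omega)).symm
  have hgcd := hper.int_gcd (periodicExt_periodic W)
  obtain ⟨m, hm⟩ : Int.gcd (r₂ - r₁) W.length ∣ W.length :=
    Int.natCast_dvd_natCast.mp (Int.gcd_dvd_right _ _)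
  rw [mul_comm] at hm
  have hm0 : m ≠ 0 := by
    rintro rfl
    omega
  have hm1 : m ≠ 1 := by
    rintro rfl
    rw [one_mul] at hm
    apply hmod
    rw [Int.modEq_iff_dvd]
    have h := Int.gcd_dvd_left (r₂ - r₁) (W.length : ℤ)
    rwa [← hm] at h
  exact hprim ⟨_, m, by omega, eq_wordPow_take_of_periodic W (by omega) hm hgcd⟩
end

section
/- Let W be a word of length n ≥ 2 over a type α and suppose the initial subword W₀ of W of length n − 1 occurs at some offset r with 0 < r < n in the bi-infinite periodic extension W̃ of W. Then W is not primitive, i.e., there exist a word C and an integer m ≥ 2 with W = C^m. -/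
/-- A word that commutes with `C` and whose length is `k * |C|` is the power `C ^ k`. -/
theorem eq_wordPow_of_append_comm {α : Type*} {C : List α} :
    ∀ {k : ℕ} {D : List α}, C ++ D = D ++ C → D.length = k * C.length → D = wordPow C k
  | 0, D, _, hlen => by
    have hD : D = [] := List.eq_nil_of_length_eq_zero (by simpa using hlen)
    simp [hD, wordPow]
  | k + 1, D, hcomm, hlen => by
    have hle : C.length ≤ D.length := by rw [hlen, Nat.succ_mul]; omega
    obtain ⟨E, rfl⟩ : C <+: D :=
      List.prefix_of_prefix_length_le ⟨D, hcomm⟩ (List.prefix_append D C) hle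
    have hE : E = wordPow C k := by
      apply eq_wordPow_of_append_comm
      · simpa using hcomm
      · rw [List.length_append, Nat.succ_mul] at hlen
        omega
    rw [hE]
    simp [wordPow, List.replicate_succ]

theorem iterate_rotate_one {α : Type*} (W : List α) (k : ℕ) :
    (fun V : List α => V.rotate 1)^[k] W = W.rotate k := by
  induction k with
  | zero => simp
  | succ k ih => rw [Function.iterate_succ_apply', ih, List.rotate_rotate]

theorem rotate_gcd_eq_self {α : Type*} {W : List α} {a b : ℕ}
    (ha : W.rotate a = W) (hb : W.rotate b = W) : W.rotate (a.gcd b) = W := by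
  rw [← iterate_rotate_one] at ha hb ⊢
  exact Function.IsPeriodicPt.gcd ha hb

/-- Two words that are permutations of each other and agree except possibly in their last
letter are equal. -/
theorem List.Perm.eq_of_dropLast_eq {α : Type*} {U V : List α} (hperm : U.Perm V)
    (h : U.dropLast = V.dropLast) : U = V := by
  rcases List.eq_nil_or_concat' U with rfl | ⟨A, a, rfl⟩
  · exact hperm.nil_eq
  rcases List.eq_nil_or_concat' V with rfl | ⟨B, b, rfl⟩
  · exact hperm.eq_nil
  simp only [List.dropLast_concat] at h
  subst h
  rw [List.perm_append_left_iff, List.singleton_perm_singleton] at hperm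
  rw [hperm]

theorem rotate_eq_self_of_occursAt {α : Type*} {W : List α} {r : ℕ}
    (hocc : OccursAt W (W.take (W.length - 1)) (r : ℤ)) : W.rotate r = W := by
  apply (List.rotate_perm W r).eq_of_dropLast_eq
  apply List.ext_getElem?
  intro i
  rw [List.dropLast_eq_take, List.dropLast_eq_take, List.length_rotate]
  by_cases hi : i < W.length - 1
  · have h := hocc i (by simp; omega)
    rw [← h, List.getElem?_take_of_lt hi, List.getElem?_rotate (by omega), add_comm i r]
    norm_cast
  · rw [List.getElem?_eq_none (by simp; omega), List.getElem?_eq_none (by simp; omega)]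

/-- If the initial subword of length `n - 1` of a word `W` of length `n ≥ 2` occurs at
some offset `r` with `0 < r < n` in the bi-infinite periodic extension of `W`, then `W`
is not primitive: `W = C^m` for some word `C` and some `m ≥ 2`. -/
theorem statement10 {α : Type*} (W : List α) (n : ℕ) (hn : 2 ≤ n) (hW : W.length = n)
    (r : ℕ) (hr0 : 0 < r) (hrn : r < n)
    (hocc : OccursAt W (W.take (n - 1)) (r : ℤ)) :
    ∃ (C : List α) (m : ℕ), 2 ≤ m ∧ W = wordPow C m := by
  subst hW
  have hd := rotate_gcd_eq_self (rotate_eq_self_of_occursAt hocc) W.rotate_length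
  obtain ⟨m, hm⟩ := Nat.gcd_dvd_right r W.length
  have hlt : r.gcd W.length < W.length := (Nat.gcd_le_left _ hr0).trans_lt hrn
  generalize r.gcd W.length = d at hd hm hlt
  have hm2 : 2 ≤ m := by
    by_contra! h
    interval_cases m <;> omega
  have hC : (W.take d).length = d := by simp; omega
  rw [List.rotate_eq_drop_append_take hlt.le] at hd
  refine ⟨W.take d, m, hm2, eq_wordPow_of_append_comm ?_ (by rw [hC, hm, mul_comm])⟩
  calc W.take d ++ W = W.take d ++ (W.drop d ++ W.take d) := by rw [hd]
    _ = W ++ W.take d := by rw [← List.append_assoc, List.take_append_drop]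
end
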